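/- arXiv:math/0503560 — 7 statements merged into one kernel-verified Lean document; each statement's English description precedes it below -/
import Mathlib

section
/- Let I ⊆ ℝ be an open interval, let a ∈ ℝ, and let α : ℝ → ℝ be differentiable on I with cos(α(u)) ≠ 0 and sin(α(u)) ≠ 0 for all u ∈ I, satisfying the meridian equation α'(u) = 1 − (a+1)/cos(α(u)) on I. Then the function u ↦ sin(α(u)) is twice differentiable on I and for every u ∈ I the Gaussian curvature of the warped metric du² + sin²α(u) dv², namely K(u) = −(d²/du²) sin(α(u)) / sin(α(u)), equals α'(u). -/
open Real

/-- If `α` solves the meridian equation `α' = 1 - (a+1)/cos α` on an open interval `I`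
(with `cos (α u) ≠ 0` and `sin (α u) ≠ 0` on `I`), then `u ↦ sin (α u)` is twice
differentiable on `I` and the Gaussian curvature
`K(u) = -(d²/du²) sin (α u) / sin (α u)` of the metric `du² + sin²α(u) dv²`
equals `α'(u)` on `I`. -/
theorem curvature_of_meridian_solution
    (p q : ℝ) (a : ℝ) (α : ℝ → ℝ)
    (I : Set ℝ) (hI : I = Set.Ioo p q)
    (hdiff : ∀ u ∈ I, DifferentiableAt ℝ α u)
    (hcos : ∀ u ∈ I, Real.cos (α u) ≠ 0)
    (hsin : ∀ u ∈ I, Real.sin (α u) ≠ 0)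
    (hode : ∀ u ∈ I, deriv α u = 1 - (a + 1) / Real.cos (α u)) :
    ∀ u ∈ I,
      DifferentiableAt ℝ (fun u => Real.sin (α u)) u ∧
      DifferentiableAt ℝ (deriv fun u => Real.sin (α u)) u ∧
      -(deriv (deriv fun u => Real.sin (α u)) u) / Real.sin (α u) = deriv α u := by
  intro u hu
  have hsin_deriv : ∀ v ∈ I, HasDerivAt (fun u => Real.sin (α u)) (Real.cos (α v) - (a + 1)) v := by
    intro v hv
    convert (hdiff v hv).hasDerivAt.sin using 1
    rw [hode v hv, mul_sub, mul_one, mul_div_cancel₀ _ (hcos v hv)]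
  have hI_nhds : I ∈ nhds u := by
    subst hI
    exact isOpen_Ioo.mem_nhds hu
  have hderiv_eq : (deriv fun u => Real.sin (α u)) =ᶠ[nhds u] fun v => Real.cos (α v) - (a + 1) := by
    filter_upwards [hI_nhds] with v hv using (hsin_deriv v hv).deriv
  have hsecond : HasDerivAt (deriv fun u => Real.sin (α u)) (-Real.sin (α u) * deriv α u) u :=
    ((hdiff u hu).hasDerivAt.cos.sub_const (a + 1)).congr_of_eventuallyEq hderiv_eq
  refine ⟨(hsin_deriv u hu).differentiableAt, hsecond.differentiableAt, ?_⟩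
  rw [hsecond.deriv, neg_mul, neg_neg, mul_div_cancel_left₀ _ (hsin u hu)]
end

section
/- Let I ⊆ ℝ be a preconnected open set and let α : ℝ → ℝ be twice differentiable on I such that for all u ∈ I: sin(α(u)) ≠ 0, cos(α(u)) ≠ 0, α'(u) ≠ 0, α'(u) ≠ 1, and α'(u) = α'(u)² − (cos(α(u))/sin(α(u)))·α''(u). Then there exists a constant m ∈ ℝ such that α'(u) = 1 + m/cos(α(u)) for all u ∈ I. -/
open Real

/-- If on a preconnected open set `I` a twice differentiable `α` satisfies
`α' = (α')² - (cos α / sin α) · α''` with `sin (α u) ≠ 0`, `cos (α u) ≠ 0`,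
`α' u ≠ 0` and `α' u ≠ 1`, then there is a constant `m` with
`α' u = 1 + m / cos (α u)` on `I`. -/
theorem meridian_equation_from_curvature
    (I : Set ℝ) (hIopen : IsOpen I) (hIconn : IsPreconnected I)
    (α : ℝ → ℝ)
    (hdiff : ∀ u ∈ I, DifferentiableAt ℝ α u)
    (hdiff2 : ∀ u ∈ I, DifferentiableAt ℝ (deriv α) u)
    (hsin : ∀ u ∈ I, Real.sin (α u) ≠ 0)
    (hcos : ∀ u ∈ I, Real.cos (α u) ≠ 0)
    (hne0 : ∀ u ∈ I, deriv α u ≠ 0)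
    (hne1 : ∀ u ∈ I, deriv α u ≠ 1)
    (hode : ∀ u ∈ I, deriv α u =
      (deriv α u) ^ 2 - (Real.cos (α u) / Real.sin (α u)) * deriv (deriv α) u) :
    ∃ m : ℝ, ∀ u ∈ I, deriv α u = 1 + m / Real.cos (α u) := by
  have hderiv : ∀ u ∈ I,
      HasDerivAt (fun x => (deriv α x - 1) * Real.cos (α x)) 0 u := by
    intro u hu
    have hprod := ((hdiff2 u hu).hasDerivAt.sub_const 1).mul (hdiff u hu).hasDerivAt.cos
    refine hprod.congr_deriv ?_
    have hs := hsin u hu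
    have hcurv := hode u hu
    field_simp at hcurv
    linear_combination hcurv
  obtain ⟨m, hm⟩ := hIopen.exists_is_const_of_deriv_eq_zero hIconn
    (fun u hu => (hderiv u hu).differentiableAt.differentiableWithinAt)
    (fun u hu => (hderiv u hu).deriv)
  refine ⟨m, fun u hu => ?_⟩
  rw [← hm u hu, mul_div_cancel_right₀ _ (hcos u hu)]
  ring
end

section
/- Let a ∈ ℝ with a ≠ 0 and a ≠ −2, ω₀ ∈ ℝ, and set ω(v) = a·v + ω₀. Let I ⊆ ℝ be a preconnected open set and α : ℝ → ℝ differentiable on I such that for all v ∈ I: cos(α(v)) ≠ 0, cos(α(v)/2) ≠ 0, sin(ω(v)) ≠ 0, a + (a+2)·tan²(α(v)/2) > 0, and α'(v) = (cos(ω(v))/sin(ω(v)))·sin(α(v))·(cos(α(v)) − a − 1)/cos(α(v)). Then the function v ↦ tan(α(v)/2)·sin(ω(v))·(a + (a+2)·tan²(α(v)/2))^(−(a+1)/(a+2)) is constant on I; equivalently there is c ∈ ℝ with tan(α(v)/2)·sin(ω(v)) = c·(a + (a+2)·tan²(α(v)/2))^((a+1)/(a+2)) for all v ∈ I. -/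
open Real

/-- The half-angle tangent `t = tan (α / 2)` turns `α' = q · sin α · (cos α - a - 1) / cos α` into
`(1 - t²) t' = -q t (a + (a + 2) t²)`. -/
theorem hasDerivAt_tan_half_of_ode {a q x : ℝ} {α : ℝ → ℝ}
    (hcos : cos (α x) ≠ 0) (hcos2 : cos (α x / 2) ≠ 0)
    (hα : HasDerivAt α (q * sin (α x) * (cos (α x) - a - 1) / cos (α x)) x) :
    1 - tan (α x / 2) ^ 2 ≠ 0 ∧
      HasDerivAt (fun v => tan (α v / 2))
        (-q * tan (α x / 2) * (a + (a + 2) * tan (α x / 2) ^ 2) / (1 - tan (α x / 2) ^ 2)) x := by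
  have hcosα : cos (α x) = cos (α x / 2) ^ 2 - sin (α x / 2) ^ 2 := by
    rw [← cos_two_mul']; ring_nf
  have hsinα : sin (α x) = 2 * sin (α x / 2) * cos (α x / 2) := by
    rw [← sin_two_mul]; ring_nf
  have hunit := sin_sq_add_cos_sq (α x / 2)
  have htan := (hasDerivAt_tan hcos2).comp x (hα.div_const 2)
  rw [hcosα] at hcos
  rw [hsinα, hcosα] at htan
  rw [tan_eq_sin_div_cos]
  generalize sin (α x / 2) = s at *
  generalize cos (α x / 2) = c at *
  have hsub : 1 - (s / c) ^ 2 = (c ^ 2 - s ^ 2) / c ^ 2 := by field_simp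
  refine ⟨by rw [hsub]; positivity, htan.congr_deriv ?_⟩
  rw [hsub]
  field_simp
  linear_combination (q * s * (a + 1)) * hunit

/-- A product `t · sin ω · P ^ (-(a + 1) / (a + 2))` with `P = a + (a + 2) t²` is stationary along
`(1 - t²) t' = -(cos ω / sin ω) t P`. -/
theorem hasDerivAt_tan_half_first_integral {a ω₀ x : ℝ} {t : ℝ → ℝ} (ha2 : a ≠ -2)
    (hsin : sin (a * x + ω₀) ≠ 0) (hpos : 0 < a + (a + 2) * t x ^ 2) (ht1 : 1 - t x ^ 2 ≠ 0)
    (ht : HasDerivAt t (-(cos (a * x + ω₀) / sin (a * x + ω₀)) * t x *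
      (a + (a + 2) * t x ^ 2) / (1 - t x ^ 2)) x) :
    HasDerivAt (fun v => t v * sin (a * v + ω₀) *
      (a + (a + 2) * t v ^ 2) ^ (-((a + 1) / (a + 2)))) 0 x := by
  have ha : a + 2 ≠ 0 := fun h => ha2 (by linarith)
  have hω : HasDerivAt (fun v => sin (a * v + ω₀)) (cos (a * x + ω₀) * (a * 1)) x :=
    (((hasDerivAt_id x).const_mul a).add_const ω₀).sin
  have hP := (((ht.fun_pow 2).const_mul (a + 2)).const_add a).rpow_const
    (p := -((a + 1) / (a + 2))) (Or.inl hpos.ne')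
  refine ((ht.fun_mul hω).fun_mul hP).congr_deriv ?_
  rw [rpow_sub_one hpos.ne']
  generalize (a + (a + 2) * t x ^ 2) ^ (-((a + 1) / (a + 2))) = R
  generalize hPx : a + (a + 2) * t x ^ 2 = P at hpos ⊢
  push_cast
  field_simp
  rw [← hPx]
  ring

/-- First integral of the trajectory equation for `a ≠ 0, -2`: along a solution
of `α' = (cos ω / sin ω) · sin α · (cos α - a - 1)/cos α` with `ω v = a v + ω₀`,
one has `tan(α/2) · sin ω = c · (a + (a+2) tan²(α/2))^((a+1)/(a+2))` for some
constant `c`. -/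
theorem trajectory_first_integral_generic
    (a ω₀ : ℝ) (ha0 : a ≠ 0) (ha2 : a ≠ -2)
    (I : Set ℝ) (hIopen : IsOpen I) (hIconn : IsPreconnected I)
    (α : ℝ → ℝ)
    (hdiff : ∀ v ∈ I, DifferentiableAt ℝ α v)
    (hcos : ∀ v ∈ I, Real.cos (α v) ≠ 0)
    (hcos2 : ∀ v ∈ I, Real.cos (α v / 2) ≠ 0)
    (hsinω : ∀ v ∈ I, Real.sin (a * v + ω₀) ≠ 0)
    (hpos : ∀ v ∈ I, a + (a + 2) * Real.tan (α v / 2) ^ 2 > 0)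
    (hode : ∀ v ∈ I, deriv α v =
      (Real.cos (a * v + ω₀) / Real.sin (a * v + ω₀)) * Real.sin (α v) *
        (Real.cos (α v) - a - 1) / Real.cos (α v)) :
    ∃ c : ℝ, ∀ v ∈ I,
      Real.tan (α v / 2) * Real.sin (a * v + ω₀) =
        c * (a + (a + 2) * Real.tan (α v / 2) ^ 2) ^ ((a + 1) / (a + 2)) := by
  have hderiv : ∀ v ∈ I, HasDerivAt (fun v => tan (α v / 2) * sin (a * v + ω₀) *
      (a + (a + 2) * tan (α v / 2) ^ 2) ^ (-((a + 1) / (a + 2)))) 0 v := fun v hv => by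
    obtain ⟨ht1, ht⟩ := hasDerivAt_tan_half_of_ode (hcos v hv) (hcos2 v hv)
      (hode v hv ▸ (hdiff v hv).hasDerivAt)
    exact hasDerivAt_tan_half_first_integral ha2 (hsinω v hv) (hpos v hv) ht1 ht
  obtain ⟨c, hc⟩ := hIopen.exists_is_const_of_deriv_eq_zero hIconn
    (fun v hv => (hderiv v hv).differentiableAt.differentiableWithinAt)
    (fun v hv => (hderiv v hv).deriv)
  refine ⟨c, fun v hv => ?_⟩
  rw [← hc v hv, mul_assoc, ← rpow_add (hpos v hv), neg_add_cancel, rpow_zero, mul_one]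
end

section
/- Let ω₀ ∈ ℝ and set ω(v) = −2v + ω₀. Let I ⊆ ℝ be a preconnected open set and α : ℝ → ℝ differentiable on I such that for all v ∈ I: cos(α(v)) ≠ 0, cos(α(v)/2) ≠ 0, sin(ω(v)) ≠ 0, and α'(v) = (cos(ω(v))/sin(ω(v)))·sin(α(v))·(cos(α(v)) + 1)/cos(α(v)). Then the function v ↦ tan(α(v)/2)·sin(ω(v))·exp(−tan²(α(v)/2)/2) is constant on I; equivalently there is c ∈ ℝ with tan(α(v)/2)·sin(ω(v)) = c·exp(tan²(α(v)/2)/2) for all v ∈ I. -/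
open Real

/-- First integral of the trajectory equation for `a = -2`: along a solution of
`α' = (cos ω / sin ω) · sin α · (cos α + 1)/cos α` with `ω v = -2v + ω₀`, one has
`tan(α/2) · sin ω = c · exp(tan²(α/2)/2)` for some constant `c`. -/
theorem trajectory_first_integral_a_eq_neg_two
    (ω₀ : ℝ)
    (I : Set ℝ) (hIopen : IsOpen I) (hIconn : IsPreconnected I)
    (α : ℝ → ℝ)
    (hdiff : ∀ v ∈ I, DifferentiableAt ℝ α v)
    (hcos : ∀ v ∈ I, Real.cos (α v) ≠ 0)
    (hcos2 : ∀ v ∈ I, Real.cos (α v / 2) ≠ 0)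
    (hsinω : ∀ v ∈ I, Real.sin (-2 * v + ω₀) ≠ 0)
    (hode : ∀ v ∈ I, deriv α v =
      (Real.cos (-2 * v + ω₀) / Real.sin (-2 * v + ω₀)) * Real.sin (α v) *
        (Real.cos (α v) + 1) / Real.cos (α v)) :
    ∃ c : ℝ, ∀ v ∈ I,
      Real.tan (α v / 2) * Real.sin (-2 * v + ω₀) =
        c * Real.exp (Real.tan (α v / 2) ^ 2 / 2) := by
  set F : ℝ → ℝ := fun v => tan (α v / 2) * sin (-2 * v + ω₀) * exp (-(tan (α v / 2) ^ 2 / 2))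
    with hF
  have hderiv : ∀ v ∈ I, HasDerivAt F 0 v := by
    intro v hv
    have hC := hcos2 v hv
    have hα := (hdiff v hv).hasDerivAt
    have ht : HasDerivAt (fun v => tan (α v / 2))
        (1 / cos (α v / 2) ^ 2 * (deriv α v / 2)) v :=
      HasDerivAt.comp (h₂ := tan) v (hasDerivAt_tan hC) (hα.div_const 2)
    have hω : HasDerivAt (fun v => sin (-2 * v + ω₀)) (cos (-2 * v + ω₀) * (-2 * 1)) v :=
      (((hasDerivAt_id v).const_mul (-2)).add_const ω₀).sin
    have hode' : deriv α v * cos (α v) * sin (-2 * v + ω₀) =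
        cos (-2 * v + ω₀) * sin (α v) * (cos (α v) + 1) := by
      have h₁ := hcos v hv
      have h₂ := hsinω v hv
      rw [hode v hv]
      generalize sin (-2 * v + ω₀) = s at h₂ ⊢
      field_simp
    have hsin_half : sin (α v) = 2 * sin (α v / 2) * cos (α v / 2) := by
      rw [← sin_two_mul, mul_div_cancel₀ _ two_ne_zero]
    have hcos_half : cos (α v) = 2 * cos (α v / 2) ^ 2 - 1 := by
      rw [← cos_two_mul, mul_div_cancel₀ _ two_ne_zero]
    rw [hsin_half, hcos_half] at hode'
    have key : 1 / cos (α v / 2) ^ 2 * (deriv α v / 2) * (1 - tan (α v / 2) ^ 2) *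
        sin (-2 * v + ω₀) = 2 * tan (α v / 2) * cos (-2 * v + ω₀) := by
      rw [tan_eq_sin_div_cos]
      generalize sin (-2 * v + ω₀) = s at hode' ⊢
      generalize cos (-2 * v + ω₀) = k at hode' ⊢
      field_simp
      rw [sin_sq]
      linear_combination hode'
    refine ((ht.mul hω).mul ((ht.pow 2).div_const 2).neg.exp).congr_deriv ?_
    simp only [Pi.mul_apply, Pi.pow_apply, Pi.neg_apply]
    push_cast
    linear_combination exp (-(tan (α v / 2) ^ 2 / 2)) * key
  obtain ⟨c, hc⟩ := hIopen.exists_is_const_of_deriv_eq_zero hIconn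
    (fun v hv => (hderiv v hv).differentiableAt.differentiableWithinAt)
    (fun v hv => (hderiv v hv).deriv)
  refine ⟨c, fun v hv => ?_⟩
  rw [← hc v hv, hF, mul_assoc, ← exp_add, neg_add_cancel, exp_zero, mul_one]
end

section
/- Let ω₀ ∈ ℝ with sin(ω₀) ≠ 0 and cos(ω₀) ≠ 0. Let I ⊆ ℝ be a preconnected open set and α : ℝ → ℝ differentiable on I such that for all v ∈ I: cos(α(v)) ≠ 0, cos(α(v)) ≠ 1, sin(α(v)) ≠ 0, tan(α(v)/2) ≠ 0, and α'(v) = (cos(ω₀)/sin(ω₀))·sin(α(v))·(cos(α(v)) − 1)/cos(α(v)). Then the function v ↦ (1/2)·tan(ω₀)·(1/(1 − cos(α(v))) + log|tan(α(v)/2)|) − v is constant on I. -/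
open Real

/-- The derivative of `x ↦ 1 / (1 - cos x) + log |tan (x / 2)|` away from the zeros of `sin`. -/
lemma hasDerivAt_one_div_one_sub_cos_add_log_abs_tan_half {x : ℝ} (hsin : Real.sin x ≠ 0) :
    HasDerivAt (fun y => 1 / (1 - Real.cos y) + Real.log |Real.tan (y / 2)|)
      (-2 * Real.cos x / (Real.sin x * (1 - Real.cos x))) x := by
  have hdouble : Real.sin x = 2 * Real.sin (x / 2) * Real.cos (x / 2) := by
    rw [← Real.sin_two_mul, mul_div_cancel₀ x two_ne_zero]
  have hs : Real.sin (x / 2) ≠ 0 := fun h => hsin (by simp [hdouble, h])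
  have hc : Real.cos (x / 2) ≠ 0 := fun h => hsin (by simp [hdouble, h])
  have hcos : 1 - Real.cos x ≠ 0 := fun h => hsin <| by
    nlinarith [Real.sin_sq_add_cos_sq x]
  have htan : Real.tan (x / 2) ≠ 0 := by
    rw [Real.tan_eq_sin_div_cos]
    exact div_ne_zero hs hc
  simp only [Real.log_abs, one_div]
  have hinv := ((Real.hasDerivAt_cos x).const_sub 1).fun_inv hcos
  have htan_half : HasDerivAt (fun y => Real.tan (y / 2))
      (1 / Real.cos (x / 2) ^ 2 * (1 / 2)) x :=
    HasDerivAt.comp (h₂ := Real.tan) (h := fun y => y / 2) x (Real.hasDerivAt_tan hc)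
      ((hasDerivAt_id x).div_const 2)
  have hlog := htan_half.log htan
  refine (hinv.add hlog).congr_deriv ?_
  have hlog_deriv :
      1 / Real.cos (x / 2) ^ 2 * (1 / 2) / Real.tan (x / 2) = 1 / Real.sin x := by
    rw [Real.tan_eq_sin_div_cos, hdouble]
    field_simp
  rw [hlog_deriv]
  field_simp
  linear_combination -Real.sin_sq_add_cos_sq x

/-- First integral of the trajectory equation for `a = 0`: along a solution of
`α' = (cos ω₀ / sin ω₀) · sin α · (cos α - 1)/cos α`, the function
`v ↦ (1/2)·tan ω₀·(1/(1 - cos α) + log |tan(α/2)|) - v` is constant. -/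
theorem trajectory_first_integral_a_eq_zero
    (ω₀ : ℝ) (hsinω : Real.sin ω₀ ≠ 0) (hcosω : Real.cos ω₀ ≠ 0)
    (I : Set ℝ) (hIopen : IsOpen I) (hIconn : IsPreconnected I)
    (α : ℝ → ℝ)
    (hdiff : ∀ v ∈ I, DifferentiableAt ℝ α v)
    (hcos : ∀ v ∈ I, Real.cos (α v) ≠ 0)
    (hcos1 : ∀ v ∈ I, Real.cos (α v) ≠ 1)
    (hsin : ∀ v ∈ I, Real.sin (α v) ≠ 0)
    (htan : ∀ v ∈ I, Real.tan (α v / 2) ≠ 0)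
    (hode : ∀ v ∈ I, deriv α v =
      (Real.cos ω₀ / Real.sin ω₀) * Real.sin (α v) *
        (Real.cos (α v) - 1) / Real.cos (α v)) :
    ∃ c : ℝ, ∀ v ∈ I,
      (1 / 2) * Real.tan ω₀ *
          (1 / (1 - Real.cos (α v)) + Real.log |Real.tan (α v / 2)|) - v = c := by
  have hderiv : ∀ v ∈ I, HasDerivAt (fun v => (1 / 2) * Real.tan ω₀ *
      (1 / (1 - Real.cos (α v)) + Real.log |Real.tan (α v / 2)|) - v) 0 v := by
    intro v hv
    have hα := (hdiff v hv).hasDerivAt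
    rw [hode v hv] at hα
    have hF := (hasDerivAt_one_div_one_sub_cos_add_log_abs_tan_half (hsin v hv)).comp v hα
    refine ((hF.const_mul ((1 / 2) * Real.tan ω₀)).sub (hasDerivAt_id v)).congr_deriv ?_
    have h₁ := hcos v hv
    have h₂ := hsin v hv
    have h₃ : 1 - Real.cos (α v) ≠ 0 := sub_ne_zero.mpr (hcos1 v hv).symm
    rw [Real.tan_eq_sin_div_cos]
    field_simp
    ring
  exact hIopen.exists_is_const_of_deriv_eq_zero hIconn
    (fun v hv => (hderiv v hv).differentiableAt.differentiableWithinAt)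
    (fun v hv => (hderiv v hv).deriv)
end

section
/- Let a, ω₀ ∈ ℝ and let α : ℝ → ℝ be differentiable. Define ω(v) = a·v + ω₀ and k(u,v) = tan(α(u)/2)·sin(ω(v)). Suppose at a point (u,v) we have cos(α(u)) ≠ 0, sin(α(u)) ≠ 0, cos(α(u)/2) ≠ 0, and α'(u) = 1 − (a+1)/cos(α(u)). Then cos(ω(v))·∂k/∂u(u,v) + (sin(ω(v))/sin(α(u)))·∂k/∂v(u,v) = ((a+1)·cos(ω(v))·sin(ω(v))/(2·cos²(α(u)/2)))·(1 − 1/cos(α(u))). -/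
open Real

/-- Derivative of the geodesic curvature `k = tan(α/2)·sin ω` of the integral
trajectories in the direction of the field `ξ = cos ω ∂_u + (sin ω / sin α) ∂_v`:
if `α' u = 1 - (a+1)/cos (α u)` then
`ξ(k) = ((a+1) cos ω sin ω / (2 cos²(α/2))) (1 - 1/cos α)`. -/
theorem xi_derivative_of_geodesic_curvature
    (a ω₀ : ℝ) (α : ℝ → ℝ) (hα : Differentiable ℝ α)
    (u v : ℝ)
    (hcos : Real.cos (α u) ≠ 0)
    (hsin : Real.sin (α u) ≠ 0)
    (hcos2 : Real.cos (α u / 2) ≠ 0)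
    (hode : deriv α u = 1 - (a + 1) / Real.cos (α u)) :
    Real.cos (a * v + ω₀) *
        deriv (fun u' => Real.tan (α u' / 2) * Real.sin (a * v + ω₀)) u +
      (Real.sin (a * v + ω₀) / Real.sin (α u)) *
        deriv (fun v' => Real.tan (α u / 2) * Real.sin (a * v' + ω₀)) v =
      ((a + 1) * Real.cos (a * v + ω₀) * Real.sin (a * v + ω₀) /
          (2 * Real.cos (α u / 2) ^ 2)) * (1 - 1 / Real.cos (α u)) := by
  have hu : HasDerivAt (fun u' => Real.tan (α u' / 2) * Real.sin (a * v + ω₀))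
      (1 / Real.cos (α u / 2) ^ 2 * (deriv α u / 2) * Real.sin (a * v + ω₀)) u :=
    ((Real.hasDerivAt_tan hcos2).comp u ((hα u).hasDerivAt.div_const 2)).mul_const _
  have hω : HasDerivAt (fun v' => a * v' + ω₀) a v := by
    simpa using ((hasDerivAt_id v).const_mul a).add_const ω₀
  have hv : HasDerivAt (fun v' => Real.tan (α u / 2) * Real.sin (a * v' + ω₀))
      (Real.tan (α u / 2) * (Real.cos (a * v + ω₀) * a)) v :=
    hω.sin.const_mul _
  have htan : Real.tan (α u / 2) / Real.sin (α u) = 1 / (2 * Real.cos (α u / 2) ^ 2) := by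
    have hdouble : Real.sin (α u) = 2 * Real.sin (α u / 2) * Real.cos (α u / 2) := by
      rw [← Real.sin_two_mul, mul_div_cancel₀ _ two_ne_zero]
    have hsin2 : Real.sin (α u / 2) ≠ 0 := fun h => hsin (by simp [hdouble, h])
    rw [hdouble, Real.tan_eq_sin_div_cos]
    field_simp
  rw [hu.deriv, hv.deriv, hode]
  calc
    _ = Real.cos (a * v + ω₀) * Real.sin (a * v + ω₀) *
        ((1 - (a + 1) / Real.cos (α u)) * (1 / (2 * Real.cos (α u / 2) ^ 2)) +
          a * (Real.tan (α u / 2) / Real.sin (α u))) := by ring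
    _ = _ := by
      rw [htan]
      ring
end

section
/- Let K : ℝ → ℝ be differentiable, let I ⊆ ℝ be open, and let α : ℝ → ℝ be differentiable on I with α'(u) = K(α(u)) and sin(α(u)/2) ≠ 0 for all u ∈ I. Then u ↦ sin(α(u)/2) is twice differentiable on I and for every u ∈ I, −(d²/du²) sin(α(u)/2) / sin(α(u)/2) = (1/4)·K(α(u))·( K(α(u)) − 2·(cos(α(u)/2)/sin(α(u)/2))·K'(α(u)) ). -/
open Real

/-- Curvature of the image `ξ(M)` of a totally geodesic unit vector field: if
`α' u = K (α u)` and `sin (α u / 2) ≠ 0` on an open set `I`, then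
`u ↦ sin (α u / 2)` is twice differentiable on `I` and
`-(d²/du²) sin(α/2) / sin(α/2) = (1/4) K (K - 2 cot(α/2) K'_α)`. -/
theorem curvature_of_image_submanifold
    (K : ℝ → ℝ) (hK : Differentiable ℝ K)
    (I : Set ℝ) (hIopen : IsOpen I)
    (α : ℝ → ℝ)
    (hdiff : ∀ u ∈ I, DifferentiableAt ℝ α u)
    (hode : ∀ u ∈ I, deriv α u = K (α u))
    (hsin : ∀ u ∈ I, Real.sin (α u / 2) ≠ 0) :
    ∀ u ∈ I,
      DifferentiableAt ℝ (fun u => Real.sin (α u / 2)) u ∧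
      DifferentiableAt ℝ (deriv fun u => Real.sin (α u / 2)) u ∧
      -(deriv (deriv fun u => Real.sin (α u / 2)) u) / Real.sin (α u / 2) =
        (1 / 4) * K (α u) *
          (K (α u) - 2 * (Real.cos (α u / 2) / Real.sin (α u / 2)) * deriv K (α u)) := by
  have hα : ∀ u ∈ I, HasDerivAt α (K (α u)) u := fun u hu =>
    hode u hu ▸ (hdiff u hu).hasDerivAt
  have hfirst : ∀ u ∈ I, HasDerivAt (fun u => Real.sin (α u / 2))
      (Real.cos (α u / 2) * (K (α u) / 2)) u := fun u hu =>
    ((hα u hu).div_const 2).sin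
  intro u hu
  have heq : (deriv fun u => Real.sin (α u / 2)) =ᶠ[nhds u]
      fun u => Real.cos (α u / 2) * (K (α u) / 2) := by
    filter_upwards [hIopen.mem_nhds hu] with v hv using (hfirst v hv).deriv
  have hKα : HasDerivAt (fun u => K (α u)) (deriv K (α u) * K (α u)) u :=
    (hK (α u)).hasDerivAt.comp u (hα u hu)
  have hsecond := ((((hα u hu).div_const 2).cos).mul (hKα.div_const 2)).congr_of_eventuallyEq heq
  refine ⟨(hfirst u hu).differentiableAt, hsecond.differentiableAt, ?_⟩
  rw [hsecond.deriv]
  have hne := hsin u hu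
  field_simp
  ring
end
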